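/- Let A be a commutative ring, 𝔞 a finitely generated ideal of A, and (M_n)_{n≥1} an inverse system of A-modules such that 𝔞^n·M_n = 0 and the transition map M_{n+1} → M_n induces an isomorphism M_{n+1}/𝔞^n·M_{n+1} ≅ M_n for every n ≥ 1. Let M̂ = lim_n M_n (the submodule of ∏_n M_n of compatible families). Then for every m ≥ 1 the kernel of the projection M̂ → M_m equals 𝔞^m·M̂ (equivalently, the submodule lim_{n≥m} 𝔞^m M_n of M̂ coincides with 𝔞^m·M̂), so the projection induces an isomorphism M̂/𝔞^m·M̂ ≅ M_m; in particular M̂ is 𝔞-adically complete and separated. -/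

import Mathlib

/-- The inverse limit `lim_n M_n` of an inverse system of `A`-modules, realized as the
submodule of compatible families in the product. -/
def invLimit {A : Type*} [CommRing A] {M : ℕ → Type*} [∀ n, AddCommGroup (M n)]
    [∀ n, Module A (M n)] (f : ∀ n : ℕ, M (n + 1) →ₗ[A] M n) :
    Submodule A (∀ n, M n) where
  carrier := {x | ∀ n : ℕ, f n (x (n + 1)) = x n}
  add_mem' := by
    intro a b ha hb n
    simp only [Pi.add_apply, map_add, ha n, hb n]
  zero_mem' := by
    intro n
    simp only [Pi.zero_apply, map_zero]
  smul_mem' := by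
    intro c a ha n
    simp only [Pi.smul_apply, map_smul, ha n]

/-!
Write `M̂ = lim_n M_n`. The projections factor through the quotients `M̂ / 𝔞^k M̂`, so they assemble
to a retraction `q` of `M̂` in its `𝔞`-adic completion `C`. As `𝔞` is finitely generated, every
`c ∈ C` differs from the image of some `x ∈ M̂` by an element of `𝔞^n C`; applying `q` gives
`q c ≡ x` modulo `𝔞^n M̂`. Hence `c` is the image of `q c`, and `M̂ = C` is complete.

Since `M̂` surjects onto `M_{n+1}` and `M_{n+1} → M_n` has kernel `𝔞^n M_{n+1}`, an element of
`ker (M̂ → M_n)` is congruent modulo `𝔞^n M̂` to an element of `ker (M̂ → M_{n+1})`. Starting in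
`ker (M̂ → M_m)` and iterating produces a Cauchy sequence which is constant modulo `𝔞^m M̂` and
whose limit lies in all the kernels, hence is zero.
-/

section Adic

variable {A N : Type*} [CommRing A] [AddCommGroup N] [Module A N] {𝔞 : Ideal A}

theorem isAdicComplete_of_leftInverse_of (h𝔞 : 𝔞.FG) {q : AdicCompletion 𝔞 N →ₗ[A] N}
    (hq : Function.LeftInverse q (AdicCompletion.of 𝔞 N)) : IsAdicComplete 𝔞 N := by
  refine AdicCompletion.of_bijective_iff.1
    ⟨hq.injective, fun c ↦ ⟨q c, AdicCompletion.ext fun n ↦ ?_⟩⟩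
  obtain ⟨x, hx⟩ := Submodule.mkQ_surjective _ (AdicCompletion.eval 𝔞 N n c)
  have hcx : c - AdicCompletion.of 𝔞 N x ∈
      (𝔞 ^ n • ⊤ : Submodule A (AdicCompletion 𝔞 N)) := by
    rw [AdicCompletion.pow_smul_top_eq_ker_eval h𝔞, LinearMap.mem_ker, map_sub,
      AdicCompletion.eval_of, hx, sub_self]
  have hqcx : q c - x ∈ (𝔞 ^ n • ⊤ : Submodule A N) := by
    simpa only [Submodule.mem_comap, map_sub, hq x] using
      Submodule.smul_top_le_comap_smul_top (𝔞 ^ n) q hcx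
  rw [AdicCompletion.of_apply, ← AdicCompletion.eval_apply, ← hx]
  exact (Submodule.Quotient.eq _).2 hqcx

theorem le_pow_smul_top_of_le_sup [IsPrecomplete 𝔞 N] {F : ℕ → Submodule A N}
    (hF : Antitone F) (hF_inf : ⨅ n, F n = ⊥) (hF_pow : ∀ n, ∃ k, 𝔞 ^ k • ⊤ ≤ F n)
    (hF_sup : ∀ n, F n ≤ 𝔞 ^ n • ⊤ ⊔ F (n + 1)) (m : ℕ) : F m ≤ 𝔞 ^ m • ⊤ := by
  intro x hx
  have exists_next (k : ℕ) (u : F (m + k)) :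
      ∃ v : F (m + (k + 1)), (u : N) ≡ v [SMOD (𝔞 ^ (m + k) • ⊤ : Submodule A N)] := by
    obtain ⟨w, hw, v, hv, hwv⟩ := Submodule.mem_sup.1 (hF_sup (m + k) u.2)
    exact ⟨⟨v, hv⟩, SModEq.sub_mem.2 (by rwa [← hwv, add_sub_cancel_right])⟩
  choose next hnext using exists_next
  let u (k : ℕ) : F (m + k) := Nat.rec (motive := fun k ↦ F (m + k)) ⟨x, hx⟩ next k
  have hu (k : ℕ) : (u k : N) ≡ (u (k + 1) : N) [SMOD (𝔞 ^ (m + k) • ⊤ : Submodule A N)] :=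
    hnext k (u k)
  have hxu (k : ℕ) : x ≡ u k [SMOD (𝔞 ^ m • ⊤ : Submodule A N)] := by
    induction k with
    | zero => rfl
    | succ k ih => exact ih.trans ((hu k).mono (Submodule.pow_smul_top_le _ _ (by lia)))
  have hu_cauchy : AdicCompletion.IsAdicCauchy 𝔞 N fun k ↦ (u k : N) :=
    (AdicCompletion.isAdicCauchy_iff 𝔞 N _).2 fun k ↦
      (hu k).mono (Submodule.pow_smul_top_le _ _ (by lia))
  obtain ⟨L, hL⟩ := IsPrecomplete.prec ‹_› hu_cauchy
  have hL_zero : L = 0 := by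
    rw [← Submodule.mem_bot A, ← hF_inf, Submodule.mem_iInf]
    intro n
    obtain ⟨k, hk⟩ := hF_pow n
    have hu_mem : (u (max n k) : N) ∈ F n := hF (by lia) (u (max n k)).2
    have hsub_mem : (u (max n k) : N) - L ∈ F n :=
      hk (Submodule.pow_smul_top_le _ _ (le_max_right n k) (SModEq.sub_mem.1 (hL (max n k))))
    exact (Submodule.sub_mem_iff_right _ hu_mem).1 hsub_mem
  exact SModEq.zero.1 (hL_zero ▸ (hxu m).trans (hL m))

theorem exists_forall_le_eval_eq_mkQ (c : AdicCompletion 𝔞 N) (n : ℕ) :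
    ∃ x : N, ∀ k ≤ n, AdicCompletion.eval 𝔞 N k c = (𝔞 ^ k • ⊤ : Submodule A N).mkQ x := by
  obtain ⟨x, hx⟩ := Submodule.mkQ_surjective _ (AdicCompletion.eval 𝔞 N n c)
  refine ⟨x, fun k hk ↦ ?_⟩
  rw [AdicCompletion.eval_apply, ← AdicCompletion.transitionMap_comp_eval_apply 𝔞 N hk c,
    ← AdicCompletion.eval_apply, ← hx]
  rfl

end Adic

namespace invLimit

variable {A : Type*} [CommRing A] {𝔞 : Ideal A} {M : ℕ → Type*} [∀ n, AddCommGroup (M n)]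
  [∀ n, Module A (M n)] (f : ∀ n : ℕ, M (n + 1) →ₗ[A] M n)

/-- The canonical projection `lim_n M_n → M_m`. -/
abbrev proj (m : ℕ) : invLimit f →ₗ[A] M m :=
  (LinearMap.proj m : (∀ n, M n) →ₗ[A] M m).comp (invLimit f).subtype

theorem comp_proj_succ (n : ℕ) : f n ∘ₗ proj f (n + 1) = proj f n :=
  LinearMap.ext fun x ↦ x.2 n

theorem antitone_ker_proj : Antitone fun n ↦ LinearMap.ker (proj f n) :=
  antitone_nat_of_succ_le fun n ↦ by
    simpa only [← comp_proj_succ f n] using LinearMap.ker_le_ker_comp (proj f (n + 1)) (f n)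

theorem iInf_ker_proj : ⨅ n, LinearMap.ker (proj f n) = ⊥ :=
  (Submodule.eq_bot_iff _).2 fun _ hx ↦
    Subtype.ext (funext fun n ↦ (Submodule.mem_iInf _).1 hx n)

variable {f}

theorem proj_surjective {M : ℕ → Type*} [∀ n, AddCommGroup (M n)] [∀ n, Module A (M n)]
    {f : ∀ n : ℕ, M (n + 1) →ₗ[A] M n} :
    ∀ {m : ℕ}, (∀ n ≥ m, Function.Surjective (f n)) → Function.Surjective (proj f m)
  | 0, hf => fun y ↦
    ⟨⟨Nat.rec y fun n ↦ Function.surjInv (hf n n.zero_le),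
      fun n ↦ Function.surjInv_eq (hf n n.zero_le) _⟩, rfl⟩
  | m + 1, hf => fun y ↦ by
    obtain ⟨x, hx⟩ := proj_surjective (M := fun n ↦ M (n + 1)) (f := fun n ↦ f (n + 1))
      (fun n hn ↦ hf (n + 1) (by lia)) y
    let x' : ∀ n, M n
      | 0 => f 0 (x.1 0)
      | n + 1 => x.1 n
    have hx' : ∀ n, f n (x' (n + 1)) = x' n
      | 0 => rfl
      | n + 1 => x.2 n
    exact ⟨⟨x', hx'⟩, hx⟩

theorem ker_proj_le_sup {n : ℕ} (hproj : Function.Surjective (proj f (n + 1)))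
    (hker : LinearMap.ker (f n) ≤ 𝔞 • ⊤) :
    LinearMap.ker (proj f n) ≤ 𝔞 • ⊤ ⊔ LinearMap.ker (proj f (n + 1)) := by
  rw [← Submodule.comap_map_eq, Submodule.map_smul'', Submodule.map_top,
    LinearMap.range_eq_top.2 hproj, ← comp_proj_succ, LinearMap.ker_comp]
  exact Submodule.comap_mono hker

/-- The comparison map `lim_k M̂ / 𝔞^k M̂ → M̂`, where `M̂ = lim_n M_n`: its `n`-th component is
induced by a factorization of the projection `M̂ → M_n` through `M̂ / 𝔞^(k n) M̂`. -/
noncomputable def ofAdicCompletion {k : ℕ → ℕ} (hk : ∀ n, 𝔞 ^ k n • ⊤ ≤ LinearMap.ker (proj f n)) :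
    AdicCompletion 𝔞 (invLimit f) →ₗ[A] invLimit f :=
  LinearMap.codRestrict (invLimit f)
    (LinearMap.pi fun n ↦
      Submodule.liftQ _ (proj f n) (hk n) ∘ₗ AdicCompletion.eval 𝔞 (invLimit f) (k n))
    fun c n ↦ by
      obtain ⟨x, hx⟩ := exists_forall_le_eval_eq_mkQ c (max (k n) (k (n + 1)))
      simp only [LinearMap.pi_apply, LinearMap.comp_apply, hx _ (le_max_left _ _),
        hx _ (le_max_right _ _), Submodule.mkQ_apply, Submodule.liftQ_apply]
      exact x.2 n

theorem ofAdicCompletion_of {k : ℕ → ℕ} (hk : ∀ n, 𝔞 ^ k n • ⊤ ≤ LinearMap.ker (proj f n))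
    (x : invLimit f) : ofAdicCompletion hk (AdicCompletion.of 𝔞 _ x) = x :=
  rfl

theorem isAdicComplete (h𝔞 : 𝔞.FG) (h : ∀ n, ∃ k, 𝔞 ^ k • ⊤ ≤ LinearMap.ker (proj f n)) :
    IsAdicComplete 𝔞 (invLimit f) := by
  choose k hk using h
  exact isAdicComplete_of_leftInverse_of h𝔞 (ofAdicCompletion_of hk)

theorem smul_top_le_ker_proj {n : ℕ} (h : (𝔞 • ⊤ : Submodule A (M n)) = ⊥) :
    𝔞 • ⊤ ≤ LinearMap.ker (proj f n) := by
  simpa only [h, Submodule.comap_bot] using Submodule.smul_top_le_comap_smul_top 𝔞 (proj f n)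

end invLimit

/-- Let `𝔞` be a finitely generated ideal of `A` and `(M_n)` an inverse system of
`A`-modules with `𝔞^n·M_n = 0` and `M_{n+1}/𝔞^n·M_{n+1} ≅ M_n` via the transition map,
for every `n ≥ 1`.  Then for each `m ≥ 1` the projection `M̂ = lim_n M_n → M_m` is
surjective with kernel `𝔞^m·M̂` (so it induces `M̂/𝔞^m·M̂ ≅ M_m`); in particular `M̂` is
`𝔞`-adically complete and separated. -/
theorem invLimit_adic (A : Type*) [CommRing A] (𝔞 : Ideal A) (hfg : 𝔞.FG)
    (M : ℕ → Type*) [∀ n, AddCommGroup (M n)] [∀ n, Module A (M n)]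
    (f : ∀ n : ℕ, M (n + 1) →ₗ[A] M n)
    (hann : ∀ n : ℕ, 1 ≤ n → (𝔞 ^ n • ⊤ : Submodule A (M n)) = ⊥)
    (hsurj : ∀ n : ℕ, 1 ≤ n → Function.Surjective (f n))
    (hker : ∀ n : ℕ, 1 ≤ n → LinearMap.ker (f n) = (𝔞 ^ n • ⊤ : Submodule A (M (n + 1)))) :
    (∀ m : ℕ, 1 ≤ m →
      Function.Surjective
        ((LinearMap.proj m : (∀ n, M n) →ₗ[A] M m).comp (invLimit f).subtype) ∧
      LinearMap.ker
          ((LinearMap.proj m : (∀ n, M n) →ₗ[A] M m).comp (invLimit f).subtype)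
        = (𝔞 ^ m • ⊤ : Submodule A (invLimit f))) ∧
    IsAdicComplete 𝔞 (invLimit f) := by
  have hpow (n : ℕ) (hn : 1 ≤ n) : 𝔞 ^ n • ⊤ ≤ LinearMap.ker (invLimit.proj f n) :=
    invLimit.smul_top_le_ker_proj (hann n hn)
  have hexists_pow (n : ℕ) : ∃ k, 𝔞 ^ k • ⊤ ≤ LinearMap.ker (invLimit.proj f n) :=
    ⟨n + 1, (hpow (n + 1) n.succ_pos).trans (invLimit.antitone_ker_proj f n.le_succ)⟩
  have hproj (m : ℕ) (hm : 1 ≤ m) : Function.Surjective (invLimit.proj f m) :=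
    invLimit.proj_surjective fun n hn ↦ hsurj n (hm.trans hn)
  have hsup (n : ℕ) : LinearMap.ker (invLimit.proj f n) ≤
      𝔞 ^ n • ⊤ ⊔ LinearMap.ker (invLimit.proj f (n + 1)) := by
    rcases n.eq_zero_or_pos with rfl | hn
    · simp
    · exact invLimit.ker_proj_le_sup (hproj (n + 1) n.succ_pos) (hker n hn).le
  have hcomplete : IsAdicComplete 𝔞 (invLimit f) := invLimit.isAdicComplete hfg hexists_pow
  refine ⟨fun m hm ↦ ⟨hproj m hm, le_antisymm ?_ (hpow m hm)⟩, hcomplete⟩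
  exact le_pow_smul_top_of_le_sup (invLimit.antitone_ker_proj f) (invLimit.iInf_ker_proj f)
    hexists_pow hsup m
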